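/- Let A and B be finite types and let J and K be positive definite matrices indexed by (A×B)×(A×B). Then sup{ tr D_op((√ρ ⊗ I_B) J (√ρ ⊗ I_B), (√ρ ⊗ I_B) K (√ρ ⊗ I_B)) : ρ a positive definite density matrix on A } = λ_max( tr_B D_op(J, K) ). (This is the closed-form expression for the Belavkin–Staszewski channel divergence in terms of the Choi matrices J and K.) -/

import Mathlib

open Matrix Kronecker ComplexOrder

/-- The Loewner order: `A ≤ B` iff `B - A` is positive semidefinite. -/
def Loewner {n : Type*} [Fintype n] (A B : Matrix n n ℂ) : Prop := (B - A).PosSemidef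

/-- Real matrix power via the spectral decomposition, with the convention `0 ^ β = 0`
(so negative powers are Moore–Penrose pseudo-inverses on the support); defined to be `0`
on non-Hermitian matrices. -/
noncomputable def mpow {n : Type*} [Fintype n] [DecidableEq n] (A : Matrix n n ℂ) (β : ℝ) :
    Matrix n n ℂ :=
  if hA : A.IsHermitian then
    (hA.eigenvectorUnitary : Matrix n n ℂ) *
      Matrix.diagonal (fun i =>
        (Complex.ofReal (if hA.eigenvalues i = 0 then 0 else (hA.eigenvalues i) ^ β))) *
      (star (hA.eigenvectorUnitary : Matrix n n ℂ))
  else 0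

/-- Matrix logarithm via the spectral decomposition (with `Real.log 0 = 0` on the kernel);
defined to be `0` on non-Hermitian matrices. -/
noncomputable def mlog {n : Type*} [Fintype n] [DecidableEq n] (A : Matrix n n ℂ) :
    Matrix n n ℂ :=
  if hA : A.IsHermitian then
    (hA.eigenvectorUnitary : Matrix n n ℂ) *
      Matrix.diagonal (fun i => (Complex.ofReal (Real.log (hA.eigenvalues i)))) *
      (star (hA.eigenvectorUnitary : Matrix n n ℂ))
  else 0

/-- Weighted matrix geometric mean `G_β(X,Y) = X^{1/2} (X^{-1/2} Y X^{-1/2})^β X^{1/2}`. -/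
noncomputable def geomMean {n : Type*} [Fintype n] [DecidableEq n] (β : ℝ)
    (X Y : Matrix n n ℂ) : Matrix n n ℂ :=
  mpow X (1/2) * mpow (mpow X (-(1/2)) * Y * mpow X (-(1/2))) β * mpow X (1/2)

/-- Operator relative entropy `D_op(X,Y) = X^{1/2} log(X^{1/2} Y⁻¹ X^{1/2}) X^{1/2}`. -/
noncomputable def Dop {n : Type*} [Fintype n] [DecidableEq n] (X Y : Matrix n n ℂ) :
    Matrix n n ℂ :=
  mpow X (1/2) * mlog (mpow X (1/2) * Y⁻¹ * mpow X (1/2)) * mpow X (1/2)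

/-- Geometric Rényi divergence `D̂_α(ρ‖σ) = (α-1)⁻¹ log tr G_{1-α}(ρ,σ)`. -/
noncomputable def Dhat {n : Type*} [Fintype n] [DecidableEq n] (α : ℝ)
    (ρ σ : Matrix n n ℂ) : ℝ :=
  (α - 1)⁻¹ * Real.log ((geomMean (1 - α) ρ σ).trace.re)

/-- Max-relative entropy `D_max(ρ‖σ) = log inf {t : ρ ≤ t σ}`. -/
noncomputable def Dmax {n : Type*} [Fintype n] (ρ σ : Matrix n n ℂ) : ℝ :=
  Real.log (sInf {t : ℝ | Loewner ρ (t • σ)})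

/-- Umegaki relative entropy `D(ρ‖σ) = tr[ρ (log ρ - log σ)]`. -/
noncomputable def Dum {n : Type*} [Fintype n] [DecidableEq n] (ρ σ : Matrix n n ℂ) : ℝ :=
  ((ρ * (mlog ρ - mlog σ)).trace).re

/-- Sandwiched Rényi divergence. -/
noncomputable def Dsand {n : Type*} [Fintype n] [DecidableEq n] (α : ℝ)
    (ρ σ : Matrix n n ℂ) : ℝ :=
  (α - 1)⁻¹ *
    Real.log ((mpow (mpow σ ((1 - α)/(2*α)) * ρ * mpow σ ((1 - α)/(2*α))) α).trace.re)

/-- Petz Rényi divergence. -/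
noncomputable def Dpetz {n : Type*} [Fintype n] [DecidableEq n] (α : ℝ)
    (ρ σ : Matrix n n ℂ) : ℝ :=
  (α - 1)⁻¹ * Real.log ((mpow ρ α * mpow σ (1 - α)).trace.re)

/-- Partial trace over the second tensor factor. -/
noncomputable def ptrB {A B : Type*} [Fintype B] (M : Matrix (A × B) (A × B) ℂ) :
    Matrix A A ℂ :=
  Matrix.of fun a a' => ∑ b, M (a, b) (a', b)

/-- Partial transpose on the second tensor factor. -/
def ptB {A B : Type*} (M : Matrix (A × B) (A × B) ℂ) : Matrix (A × B) (A × B) ℂ :=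
  Matrix.of fun x y => M (x.1, y.2) (y.1, x.2)

/-- Largest eigenvalue of a Hermitian matrix (`0` on non-Hermitian matrices). -/
noncomputable def lamMax {n : Type*} [Fintype n] [DecidableEq n] (M : Matrix n n ℂ) : ℝ :=
  if hM : M.IsHermitian then ⨆ i, hM.eigenvalues i else 0

/-- The action `Λ_J(ρ)` on the `A`-subsystem of the CP map with Choi matrix `J`. -/
noncomputable def chanApply {R A B : Type*} [Fintype A] (J : Matrix (A × B) (A × B) ℂ)
    (ρ : Matrix (R × A) (R × A) ℂ) : Matrix (R × B) (R × B) ℂ :=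
  Matrix.of fun x y => ∑ a, ∑ a', ρ (x.1, a) (y.1, a') * J (a, x.2) (a', y.2)

/-- Cone of separable operators: finite sums of Kronecker products of PSD matrices. -/
def SEPcone (A B : Type*) [Fintype A] [Fintype B] : Set (Matrix (A × B) (A × B) ℂ) :=
  { M | ∃ (k : ℕ) (P : Fin k → Matrix A A ℂ) (Q : Fin k → Matrix B B ℂ),
      (∀ i, (P i).PosSemidef) ∧ (∀ i, (Q i).PosSemidef) ∧ M = ∑ i, (P i) ⊗ₖ (Q i) }

/-- Trace norm `‖X‖₁ = tr √(X* X)`. -/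
noncomputable def traceNorm {n : Type*} [Fintype n] [DecidableEq n] (X : Matrix n n ℂ) : ℝ :=
  ((mpow (Xᴴ * X) (1/2)).trace).re

/-- Moore–Penrose pseudo-inverse of a PSD matrix. -/
noncomputable def mpinv {n : Type*} [Fintype n] [DecidableEq n] (M : Matrix n n ℂ) :
    Matrix n n ℂ :=
  mpow M (-1)

/-- Link product of Choi matrices (Choi matrix of the composed map). -/
noncomputable def linkProd {A B C : Type*} [Fintype B] (J₁ : Matrix (A × B) (A × B) ℂ)
    (J₂ : Matrix (B × C) (B × C) ℂ) : Matrix (A × C) (A × C) ℂ :=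
  Matrix.of fun x y => ∑ b, ∑ b', J₁ (x.1, b) (y.1, b') * J₂ (b, x.2) (b', y.2)

/-!
Interpolating `log` by a real polynomial `p` on a finite spectrum turns `D_op(X, Y)` into
`p(X Y⁻¹) X`. This form is covariant under `(X, Y) ↦ (T X T*, T Y T*)` for every invertible `T`,
because it no longer involves `√X`. Taking `T = √ρ ⊗ 1` reduces the
divergence to the linear functional `ρ ↦ tr(ρ tr_B D_op(J, K))`. On all density matrices this is
at most the largest eigenvalue, with equality at the projection onto a top eigenvector; mixing that
projection with a little of the maximally mixed state makes it positive definite.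
-/

open Polynomial Filter Topology MatrixOrder Matrix.Norms.L2Operator

section Polynomial

lemma exists_polynomial_eqOn {F : Type*} [Field F] {s : Set F} (hs : s.Finite) (f : F → F) :
    ∃ p : F[X], s.EqOn f p.eval := by
  have := hs.to_subtype
  obtain ⟨p, hp⟩ := (Polynomial.exists_eval_eq_iff (Subtype.val : s → F) fun x ↦ f x).2
    fun x y hxy ↦ congrArg f hxy
  exact ⟨p, fun x hx ↦ (hp ⟨x, hx⟩).symm⟩

lemma semiconjBy_aeval {R S : Type*} [CommSemiring R] [Semiring S] [Algebra R S] {c a b : S}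
    (h : SemiconjBy c a b) (p : R[X]) : SemiconjBy c (aeval a p) (aeval b p) := by
  induction p using Polynomial.induction_on' with
  | add p q hp hq => simpa only [map_add] using hp.add_right hq
  | monomial k r =>
    simpa only [aeval_monomial] using
      SemiconjBy.mul_right (Algebra.commute_algebraMap_right r c) (h.pow_right k)

end Polynomial

section FunctionalCalculus

variable {n : Type*} [Fintype n] [DecidableEq n]

lemma exists_polynomial_cfc_eq_aeval {𝕜 : Type*} [RCLike 𝕜] {M N : Matrix n n 𝕜}
    (hM : M.IsHermitian) (hN : N.IsHermitian) (f : ℝ → ℝ) :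
    ∃ p : ℝ[X], cfc f M = aeval M p ∧ cfc f N = aeval N p := by
  obtain ⟨p, hp⟩ := exists_polynomial_eqOn
    (M.finite_real_spectrum.union N.finite_real_spectrum) f
  exact ⟨p,
    (cfc_congr (hp.mono Set.subset_union_left)).trans (cfc_polynomial p M hM.isSelfAdjoint),
    (cfc_congr (hp.mono Set.subset_union_right)).trans (cfc_polynomial p N hN.isSelfAdjoint)⟩

lemma mlog_eq_cfc (M : Matrix n n ℂ) : mlog M = cfc Real.log M := by
  by_cases hM : M.IsHermitian
  · rw [mlog, dif_pos hM, hM.cfc_eq, IsHermitian.cfc, Unitary.conjStarAlgAut_apply]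
    rfl
  · rw [mlog, dif_neg hM, cfc_apply_of_not_predicate (R := ℝ) (p := IsSelfAdjoint) M hM]

lemma mpow_eq_cfc (M : Matrix n n ℂ) (β : ℝ) :
    mpow M β = cfc (fun x : ℝ ↦ if x = 0 then 0 else x ^ β) M := by
  by_cases hM : M.IsHermitian
  · rw [mpow, dif_pos hM, hM.cfc_eq, IsHermitian.cfc, Unitary.conjStarAlgAut_apply]
    rfl
  · rw [mpow, dif_neg hM, cfc_apply_of_not_predicate (R := ℝ) (p := IsSelfAdjoint) M hM]

lemma isHermitian_mlog (M : Matrix n n ℂ) : (mlog M).IsHermitian := by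
  rw [mlog_eq_cfc]
  exact cfc_predicate Real.log M

lemma isHermitian_mpow (M : Matrix n n ℂ) (β : ℝ) : (mpow M β).IsHermitian := by
  rw [mpow_eq_cfc]
  exact cfc_predicate _ M

lemma mpow_half_mul_self {M : Matrix n n ℂ} (hM : M.PosSemidef) :
    mpow M (1 / 2) * mpow M (1 / 2) = M := by
  have hM' : IsSelfAdjoint M := hM.isHermitian
  rw [mpow_eq_cfc, ← cfc_mul _ _ _ (M.finite_real_spectrum.continuousOn _)
    (M.finite_real_spectrum.continuousOn _)]
  refine (cfc_congr fun x hx ↦ ?_).trans (cfc_id' ℝ M)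
  have hx₀ : 0 ≤ x := spectrum_nonneg_of_nonneg hM.nonneg hx
  rcases hx₀.eq_or_lt with rfl | hx₀
  · simp
  · norm_num [hx₀.ne', ← Real.rpow_add hx₀]

lemma isUnit_mpow_half {M : Matrix n n ℂ} (hM : M.PosDef) : IsUnit (mpow M (1 / 2)) :=
  isUnit_of_mul_isUnit_left <| (mpow_half_mul_self hM.posSemidef).symm ▸ hM.isUnit

end FunctionalCalculus

section OperatorRelativeEntropy

variable {n : Type*} [Fintype n] [DecidableEq n]

lemma isHermitian_mpow_half_mul_mul {Z : Matrix n n ℂ} (hZ : Z.IsHermitian) (X : Matrix n n ℂ) :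
    (mpow X (1 / 2) * Z * mpow X (1 / 2)).IsHermitian := by
  simpa only [(isHermitian_mpow X (1 / 2)).eq] using
    isHermitian_mul_mul_conjTranspose (mpow X (1 / 2)) hZ

lemma isHermitian_Dop (X Y : Matrix n n ℂ) : (Dop X Y).IsHermitian :=
  isHermitian_mpow_half_mul_mul (isHermitian_mlog _) X

lemma Dop_eq_aeval_mul {X Y : Matrix n n ℂ} (hX : X.PosSemidef) {p : ℝ[X]}
    (hp : cfc Real.log (mpow X (1 / 2) * Y⁻¹ * mpow X (1 / 2)) =
      aeval (mpow X (1 / 2) * Y⁻¹ * mpow X (1 / 2)) p) :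
    Dop X Y = aeval (X * Y⁻¹) p * X := by
  have hS := mpow_half_mul_self hX
  rw [Dop, mlog_eq_cfc, hp]
  set S := mpow X (1 / 2)
  have hSX : SemiconjBy S (S * Y⁻¹ * S) (X * Y⁻¹) := by
    simp only [SemiconjBy, ← hS, Matrix.mul_assoc]
  rw [(semiconjBy_aeval hSX p).eq, Matrix.mul_assoc, hS]

theorem Dop_mul_mul_conjTranspose {X Y T : Matrix n n ℂ} (hX : X.PosSemidef)
    (hY : Y.IsHermitian) (hT : IsUnit T) :
    Dop (T * X * Tᴴ) (T * Y * Tᴴ) = T * Dop X Y * Tᴴ := by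
  obtain ⟨p, hp, hp'⟩ := exists_polynomial_cfc_eq_aeval
    (isHermitian_mpow_half_mul_mul hY.inv X)
    (isHermitian_mpow_half_mul_mul (isHermitian_mul_mul_conjTranspose T hY).inv (T * X * Tᴴ))
    Real.log
  rw [Dop_eq_aeval_mul hX hp, Dop_eq_aeval_mul (hX.mul_mul_conjTranspose_same T) hp']
  have hdet : IsUnit T.det := (isUnit_iff_isUnit_det T).1 hT
  have hdet' : IsUnit Tᴴ.det := (isUnit_iff_isUnit_det Tᴴ).1 hT.star
  have hconj : SemiconjBy T (X * Y⁻¹) (T * X * Tᴴ * (T * Y * Tᴴ)⁻¹) := by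
    simp only [SemiconjBy, Matrix.mul_inv_rev, Matrix.mul_assoc,
      mul_nonsing_inv_cancel_left _ _ hdet', nonsing_inv_mul _ hdet, Matrix.mul_one]
  simp only [← Matrix.mul_assoc, (semiconjBy_aeval hconj p).eq]

end OperatorRelativeEntropy

section PartialTrace

variable {A B : Type*} [Fintype B]

lemma isHermitian_ptrB {M : Matrix (A × B) (A × B) ℂ} (hM : M.IsHermitian) :
    (ptrB M).IsHermitian := by
  ext a a'
  simp only [ptrB, conjTranspose_apply, of_apply, star_sum, hM.apply]

lemma trace_kronecker_one_mul [Fintype A] [DecidableEq B] (ρ : Matrix A A ℂ)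
    (M : Matrix (A × B) (A × B) ℂ) :
    ((ρ ⊗ₖ (1 : Matrix B B ℂ)) * M).trace = (ρ * ptrB M).trace := by
  simp only [Matrix.trace, Matrix.diag_apply, Matrix.mul_apply, ptrB, of_apply,
    Fintype.sum_prod_type, kroneckerMap_apply, Matrix.one_apply, mul_ite, mul_one, mul_zero,
    ite_mul, zero_mul, Finset.sum_ite_eq, Finset.mem_univ, if_true, Finset.mul_sum]
  exact Finset.sum_congr rfl fun a _ ↦ Finset.sum_comm

theorem trace_Dop_kronecker_mpow_half [Fintype A] [DecidableEq A] [DecidableEq B]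
    {J K : Matrix (A × B) (A × B) ℂ} (hJ : J.PosSemidef) (hK : K.IsHermitian)
    {ρ : Matrix A A ℂ} (hρ : ρ.PosDef) :
    (Dop
      ((mpow ρ (1/2) ⊗ₖ (1 : Matrix B B ℂ)) * J * (mpow ρ (1/2) ⊗ₖ (1 : Matrix B B ℂ)))
      ((mpow ρ (1/2) ⊗ₖ (1 : Matrix B B ℂ)) * K *
        (mpow ρ (1/2) ⊗ₖ (1 : Matrix B B ℂ)))).trace = (ρ * ptrB (Dop J K)).trace := by
  set T := mpow ρ (1/2) ⊗ₖ (1 : Matrix B B ℂ) with hT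
  have hTunit : IsUnit T := (isUnit_mpow_half hρ).kronecker isUnit_one
  have hTstar : Tᴴ = T := by
    rw [hT, conjTranspose_kronecker, (isHermitian_mpow ρ (1/2)).eq, conjTranspose_one]
  have hTsq : T * T = ρ ⊗ₖ (1 : Matrix B B ℂ) := by
    rw [hT, ← mul_kronecker_mul, mpow_half_mul_self hρ.posSemidef, Matrix.one_mul]
  have hcov := Dop_mul_mul_conjTranspose hJ hK hTunit
  rw [hTstar] at hcov
  rw [hcov, trace_mul_cycle, hTsq, trace_kronecker_one_mul]

end PartialTrace

section LargestEigenvalue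

variable {n : Type*} [Fintype n]

lemma trace_mul_nonneg {𝕜 : Type*} [RCLike 𝕜] {M N : Matrix n n 𝕜} (hM : M.PosSemidef)
    (hN : N.PosSemidef) : 0 ≤ (M * N).trace := by
  classical
  obtain ⟨C, rfl⟩ := CStarAlgebra.nonneg_iff_eq_star_mul_self.1 hM.nonneg
  rw [Matrix.mul_assoc, trace_mul_comm]
  exact (hN.mul_mul_conjTranspose_same C).trace_nonneg

/-- Full-rank density matrices are dense: mix `σ` with the maximally mixed state. -/
lemma re_trace_mul_le_of_forall_posDef {H : Matrix n n ℂ} {b : ℝ}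
    (hb : ∀ ρ : Matrix n n ℂ, ρ.PosDef → ρ.trace = 1 → (ρ * H).trace.re ≤ b)
    {σ : Matrix n n ℂ} (hσ : σ.PosSemidef) (hσ₁ : σ.trace = 1) : (σ * H).trace.re ≤ b := by
  classical
  have : Nonempty n := by
    by_contra h
    simp [Matrix.trace, not_nonempty_iff.1 h] at hσ₁
  set τ : Matrix n n ℂ := (Fintype.card n : ℝ)⁻¹ • (1 : Matrix n n ℂ) with hτ_def
  have hτ : τ.PosDef := PosDef.one.smul (by positivity)
  have hτ₁ : τ.trace = 1 := by simp [hτ_def]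
  have hmix (ε : ℝ) (hε : ε ∈ Set.Ioo (0 : ℝ) 1) :
      (1 - ε) * (σ * H).trace.re + ε * (τ * H).trace.re ≤ b := by
    have hpos : ((1 - ε) • σ + ε • τ).PosDef :=
      PosDef.posSemidef_add (hσ.smul (sub_nonneg.2 hε.2.le)) (hτ.smul hε.1)
    simpa [add_mul] using hb _ hpos (by simp [hσ₁, hτ₁])
  have hlim : Tendsto (fun ε : ℝ ↦ (1 - ε) * (σ * H).trace.re + ε * (τ * H).trace.re) (𝓝[>] 0)
      (𝓝 (σ * H).trace.re) :=
    tendsto_nhdsWithin_of_tendsto_nhds <|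
      Continuous.tendsto' (by fun_prop) _ _ (by simp)
  exact le_of_tendsto hlim <| mem_of_superset (Ioo_mem_nhdsGT one_pos) hmix

variable [DecidableEq n]

lemma eigenvalues_le_lamMax {H : Matrix n n ℂ} (hH : H.IsHermitian) (i : n) :
    hH.eigenvalues i ≤ lamMax H := by
  rw [lamMax, dif_pos hH]
  exact le_ciSup (Set.finite_range _).bddAbove i

lemma exists_eigenvalues_eq_lamMax [Nonempty n] {H : Matrix n n ℂ} (hH : H.IsHermitian) :
    ∃ i, hH.eigenvalues i = lamMax H := by
  rw [lamMax, dif_pos hH]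
  exact exists_eq_ciSup_of_finite

lemma le_algebraMap_lamMax {H : Matrix n n ℂ} (hH : H.IsHermitian) :
    H ≤ algebraMap ℝ (Matrix n n ℂ) (lamMax H) := by
  refine le_algebraMap_of_spectrum_le (fun x hx ↦ ?_) hH.isSelfAdjoint
  obtain ⟨i, rfl⟩ := hH.spectrum_real_eq_range_eigenvalues ▸ hx
  exact eigenvalues_le_lamMax hH i

lemma re_trace_mul_le_lamMax {H ρ : Matrix n n ℂ} (hH : H.IsHermitian) (hρ : ρ.PosSemidef)
    (hρ₁ : ρ.trace = 1) : (ρ * H).trace.re ≤ lamMax H := by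
  have hgap : 0 ≤ (ρ * (algebraMap ℝ (Matrix n n ℂ) (lamMax H) - H)).trace :=
    trace_mul_nonneg hρ (le_algebraMap_lamMax hH)
  simpa [mul_sub, Algebra.algebraMap_eq_smul_one, hρ₁] using (Complex.le_def.1 hgap).1

lemma exists_posSemidef_re_trace_mul_eq_eigenvalues {H : Matrix n n ℂ} (hH : H.IsHermitian)
    (i : n) : ∃ σ : Matrix n n ℂ,
      σ.PosSemidef ∧ σ.trace = 1 ∧ (σ * H).trace.re = hH.eigenvalues i := by
  set v : n → ℂ := ⇑(hH.eigenvectorBasis i)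
  have hv : v ⬝ᵥ star v = 1 := by
    rw [← EuclideanSpace.inner_eq_star_dotProduct, inner_self_eq_norm_sq_to_K,
      hH.eigenvectorBasis.orthonormal.1 i]
    simp
  refine ⟨vecMulVec v (star v), posSemidef_vecMulVec_self_star v, ?_, ?_⟩
  · rw [trace_vecMulVec, hv]
  · rw [trace_mul_comm, mul_vecMulVec, hH.mulVec_eigenvectorBasis, trace_vecMulVec,
      smul_dotProduct, hv]
    simp

theorem isLUB_re_trace_mul_lamMax [Nonempty n] {H : Matrix n n ℂ} (hH : H.IsHermitian) :
    IsLUB {x : ℝ | ∃ ρ : Matrix n n ℂ, ρ.PosDef ∧ ρ.trace = 1 ∧ x = (ρ * H).trace.re}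
      (lamMax H) := by
  refine ⟨?_, fun b hb ↦ ?_⟩
  · rintro x ⟨ρ, hρ, hρ₁, rfl⟩
    exact re_trace_mul_le_lamMax hH hρ.posSemidef hρ₁
  · obtain ⟨i, hi⟩ := exists_eigenvalues_eq_lamMax hH
    obtain ⟨σ, hσ, hσ₁, hσH⟩ := exists_posSemidef_re_trace_mul_eq_eigenvalues hH i
    rw [← hi, ← hσH]
    exact re_trace_mul_le_of_forall_posDef (fun ρ hρ hρ₁ ↦ hb ⟨ρ, hρ, hρ₁, rfl⟩) hσ hσ₁

theorem sSup_re_trace_mul_eq_lamMax {H : Matrix n n ℂ} (hH : H.IsHermitian) :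
    sSup {x : ℝ | ∃ ρ : Matrix n n ℂ, ρ.PosDef ∧ ρ.trace = 1 ∧ x = (ρ * H).trace.re} =
      lamMax H := by
  cases isEmpty_or_nonempty n
  · simp [lamMax, hH, Matrix.trace]
  · have hlub := isLUB_re_trace_mul_lamMax hH
    exact hlub.csSup_eq hlub.nonempty

end LargestEigenvalue

/-- For singular `J` the convention `log 0 = 0` is immaterial, as `√J K⁻¹ √J` and `√J` have the
same kernel. -/
theorem BS_channel_divergence_closed_form_general {A B : Type*} [Fintype A] [DecidableEq A]
    [Fintype B] [DecidableEq B]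
    (J K : Matrix (A × B) (A × B) ℂ) (hJ : J.PosSemidef) (hK : K.PosDef) :
    sSup {x : ℝ | ∃ ρ : Matrix A A ℂ, ρ.PosDef ∧ ρ.trace = 1 ∧
        x = (Dop
              ((mpow ρ (1/2) ⊗ₖ (1 : Matrix B B ℂ)) * J * (mpow ρ (1/2) ⊗ₖ (1 : Matrix B B ℂ)))
              ((mpow ρ (1/2) ⊗ₖ (1 : Matrix B B ℂ)) * K *
                (mpow ρ (1/2) ⊗ₖ (1 : Matrix B B ℂ)))).trace.re} =
      lamMax (ptrB (Dop J K)) := by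
  rw [← sSup_re_trace_mul_eq_lamMax (isHermitian_ptrB (isHermitian_Dop J K))]
  refine congrArg sSup (Set.ext fun x ↦ exists_congr fun ρ ↦ and_congr_right fun hρ ↦ ?_)
  rw [trace_Dop_kronecker_mpow_half hJ hK.isHermitian hρ]

/-- closed-form expression of the Belavkin–Staszewski channel divergence:
the supremum over positive definite density matrices `ρ` on `A` of
`tr D_op((√ρ ⊗ I) J (√ρ ⊗ I), (√ρ ⊗ I) K (√ρ ⊗ I))` equals `λ_max(tr_B D_op(J, K))`. -/
theorem BS_channel_divergence_closed_form {A B : Type*} [Fintype A] [DecidableEq A]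
    [Fintype B] [DecidableEq B]
    (J K : Matrix (A × B) (A × B) ℂ) (hJ : J.PosDef) (hK : K.PosDef) :
    sSup {x : ℝ | ∃ ρ : Matrix A A ℂ, ρ.PosDef ∧ ρ.trace = 1 ∧
        x = (Dop
              ((mpow ρ (1/2) ⊗ₖ (1 : Matrix B B ℂ)) * J * (mpow ρ (1/2) ⊗ₖ (1 : Matrix B B ℂ)))
              ((mpow ρ (1/2) ⊗ₖ (1 : Matrix B B ℂ)) * K *
                (mpow ρ (1/2) ⊗ₖ (1 : Matrix B B ℂ)))).trace.re} =
      lamMax (ptrB (Dop J K)) :=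
  BS_channel_divergence_closed_form_general J K hJ.posSemidef hK
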